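/- Fix m ∈ ℕ and 1 ≤ i ≤ m. Let {S_t} be a simple exclusion process on Λ(L,2) started at a configuration S_1 ∈ G(i), and let τ_coll = min{t > 0 : there exist u,v with S_t[u] = S_t[v] = 1 and |u−v| = 1} be the first time two particles are adjacent. Then there exists δ = δ(m) > 0 such that P[τ_coll > δ n^2 / log n] > δ / log n. -/

import Mathlib

/-!
The proof exhibits an explicit function of the configuration that is almost a submartingale.

On `ℤ²` the function `log (x² + y² + 1/2)` is discrete subharmonic (`log_subharmonic`). With
`s = x² + y² + 1/2` and a cutoff `R = n / log n` for the squared distance, put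
`φ(s) = s/R - 1 - log (s/R)` for `s ≤ R` and `φ(s) = 0` beyond. Since `q - 1 - log q` vanishes to
second order at `q = 1`, the discrete Laplacian of `φ` is at most `48 / R` everywhere
(`pot_laplacian`); the cutoff is far below `L²`, so `φ` descends to the torus.

The energy of a configuration is the sum of `φ` over ordered pairs of distinct particles. Let `D`
be the value of `φ` at neighbouring sites.
* As long as no two particles are adjacent, the two particles of a pair move independently of the
  exclusion rule, so one step increases the expected energy by at most `192 k² / (n R)` for `k`
  particles (`expected_energy`).
* A collision forces the energy to be at least `2 D` (`energy_coll`).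
* In `G(i)` only the pair at distance two is within the cutoff, and there `φ ≤ D - 1/4`, so the
  initial energy is at most `2 D - 1/2` (`energy_init`).

Running `2 D - energy` until the collision time (`survProb_lower`) gives
`2 D · P[τ > T] ≥ 1/2 - 192 k² T / (n R) ≥ 1/4` for `T = δ n² / log n = δ n R` with `δ` small, and
`D ≤ log n` gives the claim. On the finitely many small tori, `δ` is chosen so that the time
horizon is zero.
-/

noncomputable section
open scoped Classical
open Finset

namespace KCIP

/-! ### The two-dimensional discrete torus -/

/-- Vertices of the 2-dimensional discrete torus `Λ(L,2) = ℤ_L²`. -/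
abbrev Vertex (L : ℕ) := ZMod L × ZMod L

/-- Nearest-neighbour adjacency on the torus. -/
def adj {L : ℕ} (u v : Vertex L) : Prop :=
  u - v = (1, 0) ∨ u - v = (0, 1) ∨ v - u = (1, 0) ∨ v - u = (0, 1)

/-- Distance between two elements of `ℤ_L`. -/
def zdist {L : ℕ} [NeZero L] (a b : ZMod L) : ℕ := min (a - b).val (b - a).val

/-- Graph (ℓ¹) distance on the torus. -/
def torusDist {L : ℕ} [NeZero L] (u v : Vertex L) : ℕ :=
  zdist u.1 v.1 + zdist u.2 v.2

/-- Particle configurations on the torus: elements of `{0,1}^{Λ(L,2)}`. -/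
abbrev Config (L : ℕ) := Vertex L → Bool

/-- Number of particles of a configuration. -/
def numParticles {L : ℕ} [NeZero L] (x : Config L) : ℕ :=
  (univ.filter fun v => x v = true).card

/-- The kinetic constraint: `v` has an occupied neighbour in `x`. -/
def hasOccNbr {L : ℕ} (x : Config L) (v : Vertex L) : Prop :=
  ∃ u, adj u v ∧ x u = true

/-! ### Generic finite Markov chain notions -/

section Generic

variable {S : Type*} [Fintype S]

/-- Point mass at `z`. -/
def delta (z : S) : S → ℝ := fun y => if y = z then 1 else 0

/-- One step of the chain applied to a distribution. -/
def evolve (K : S → S → ℝ) (μ : S → ℝ) : S → ℝ := fun y => ∑ x, μ x * K x y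

/-- Distribution after `t` steps. -/
def iterDist (K : S → S → ℝ) (μ : S → ℝ) : ℕ → S → ℝ
  | 0 => μ
  | t + 1 => evolve K (iterDist K μ t)

/-- Total variation distance. -/
def tvDist (μ ν : S → ℝ) : ℝ := (1 / 2) * ∑ x, |μ x - ν x|

/-- Mixing time (to total variation distance `1/4`, from a worst-case starting state). -/
def mixingTime (K : S → S → ℝ) (π : S → ℝ) : ℕ :=
  sInf {t : ℕ | 0 < t ∧ ∀ x : S, tvDist (iterDist K (delta x) t) π < 1 / 4}

/-- Expectation of `g` at time `t` of the chain started at `z`. -/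
def expAt (K : S → S → ℝ) (z : S) (t : ℕ) (g : S → ℝ) : ℝ :=
  ∑ y, iterDist K (delta z) t y * g y

/-- Dirichlet form of a kernel `K` reversible with respect to `π`. -/
def dirichletForm (K : S → S → ℝ) (π : S → ℝ) (f : S → ℝ) : ℝ :=
  (1 / 2) * ∑ x, ∑ y, |f x - f y| ^ 2 * K x y * π x

/-- Variance functional. -/
def varForm (π : S → ℝ) (f : S → ℝ) : ℝ :=
  (1 / 2) * ∑ x, ∑ y, |f x - f y| ^ 2 * π x * π y

/-- Entropy functional used in the definition of the log-Sobolev constant. -/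
def entForm (π : S → ℝ) (f : S → ℝ) : ℝ :=
  ∑ x, f x ^ 2 * Real.log (f x ^ 2 / ∑ y, f y ^ 2 * π y) * π x

/-- Spectral gap `1 - β₁(K)`, via its variational characterization. -/
def spectralGap (K : S → S → ℝ) (π : S → ℝ) : ℝ :=
  sInf {r : ℝ | ∃ f : S → ℝ, varForm π f ≠ 0 ∧ r = dirichletForm K π f / varForm π f}

/-- Log-Sobolev constant `α(K)`, via its variational characterization. -/
def logSobolevConst (K : S → S → ℝ) (π : S → ℝ) : ℝ :=
  sInf {r : ℝ | ∃ f : S → ℝ, entForm π f ≠ 0 ∧ r = dirichletForm K π f / entForm π f}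

/-- Uniform distribution on a finite state space. -/
def uniformDist (S : Type*) [Fintype S] : S → ℝ := fun _ => 1 / (Fintype.card S : ℝ)

/-- Probability of being at `y` at time `t`, having avoided the set `A` at all times
`0, 1, …, t`, for the chain `K` started at `z`. -/
def killedDist (K : S → S → ℝ) (z : S) (A : Set S) : ℕ → S → ℝ
  | 0 => fun y => if y = z ∧ y ∉ A then 1 else 0
  | t + 1 => fun y => if y ∈ A then 0 else ∑ x, killedDist K z A t x * K x y

/-- `P_z[τ_A > T]`, where `τ_A = min {t ≥ 0 : Z_t ∈ A}`. -/
def survProb (K : S → S → ℝ) (z : S) (A : Set S) (T : ℕ) : ℝ :=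
  ∑ y, killedDist K z A T y

/-- `E_z[τ_A]`, where `τ_A = min {t ≥ 0 : Z_t ∈ A}`. -/
def hitTimeExp (K : S → S → ℝ) (z : S) (A : Set S) : ℝ :=
  ∑' T : ℕ, survProb K z A T

/-- Probability that the chain started at `z` follows the trajectory `ω` up to time `T`. -/
def pathProb (K : S → S → ℝ) (z : S) (T : ℕ) (ω : Fin (T + 1) → S) : ℝ :=
  (if ω 0 = z then 1 else 0) * ∏ t : Fin T, K (ω t.castSucc) (ω t.succ)

/-- Expectation of a path functional of the trajectory up to time `T`. -/
def expPath (K : S → S → ℝ) (z : S) (T : ℕ) (f : (Fin (T + 1) → S) → ℝ) : ℝ :=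
  ∑ ω : Fin (T + 1) → S, pathProb K z T ω * f ω

/-- Probability of a path event of the trajectory up to time `T`. -/
def prPath (K : S → S → ℝ) (z : S) (T : ℕ) (E : (Fin (T + 1) → S) → Prop) : ℝ :=
  ∑ ω : Fin (T + 1) → S, if E ω then pathProb K z T ω else 0

/-- Probability of going from `x` to `z` in `t` steps, all of whose destinations
avoid the set `A`. -/
def tabooPow (K : S → S → ℝ) (A : Set S) : ℕ → S → S → ℝ
  | 0 => fun x y => if y = x then 1 else 0
  | t + 1 => fun x y => ∑ z, tabooPow K A t x z * (if y ∈ A then 0 else K z y)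

/-- The transition kernel of the trace of the chain `K` on the set `A`. -/
def traceKernel (K : S → S → ℝ) (A : Set S) : {x // x ∈ A} → {x // x ∈ A} → ℝ :=
  fun x y => ∑' t : ℕ, ∑ z, tabooPow K A t x.1 z * K z y.1

/-- A distribution `π` conditioned on the set `A`. -/
def condDist (π : S → ℝ) (A : Set S) : {x // x ∈ A} → ℝ :=
  fun x => π x.1 / ∑ y : {x // x ∈ A}, π y.1

end Generic

/-- Extend a finite trajectory to all times, by repeating the final state. -/
def extendPath {S : Type*} {T : ℕ} (ω : Fin (T + 1) → S) : ℕ → S :=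
  fun t => ω ⟨min t T, Nat.lt_succ_of_le (min_le_right t T)⟩

/-- The alternating hitting times of the sets `A` and `B` along a trajectory `ω`:
`altTimes ω A B (j-1) = (τ^A(j), τ^B(j))` where `τ^A(1) = inf {t : ω t ∈ A}`,
`τ^B(1) = inf {t : ω t ∈ B}`, `τ^A(j+1) = inf {t > τ^B(j) : ω t ∈ A}` and
`τ^B(j+1) = inf {t > τ^A(j) : ω t ∈ B}`. -/
def altTimes {S : Type*} (ω : ℕ → S) (A B : Set S) : ℕ → ℕ∞ × ℕ∞
  | 0 => (⨅ t ∈ {t : ℕ | ω t ∈ A}, (t : ℕ∞), ⨅ t ∈ {t : ℕ | ω t ∈ B}, (t : ℕ∞))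
  | j + 1 =>
      (⨅ t ∈ {t : ℕ | (altTimes ω A B j).2 < (t : ℕ∞) ∧ ω t ∈ A}, (t : ℕ∞),
       ⨅ t ∈ {t : ℕ | (altTimes ω A B j).1 < (t : ℕ∞) ∧ ω t ∈ B}, (t : ℕ∞))

/-! ### The kinetically constrained Ising process -/

/-- Transition kernel of the KCIP on `Λ(L,2)` with density `p`. -/
def kcipKernel (L : ℕ) [NeZero L] (p : ℝ) (x y : Config L) : ℝ :=
  (1 / ((L : ℝ) ^ 2)) * ∑ v : Vertex L,
    if hasOccNbr x v then
      p * (if y = Function.update x v true then 1 else 0)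
        + (1 - p) * (if y = Function.update x v false then 1 else 0)
    else (if y = x then 1 else 0)

/-- Stationary distribution of the KCIP on `Λ(L,2)` with density `p`. -/
def kcipStationary (L : ℕ) [NeZero L] (p : ℝ) (y : Config L) : ℝ :=
  if 0 < numParticles y then
    p ^ numParticles y * (1 - p) ^ (L ^ 2 - numParticles y) / (1 - (1 - p) ^ (L ^ 2))
  else 0

/-- `Ω_k`: configurations with `k` particles, no two of them adjacent. -/
def OmegaSet (L k : ℕ) [NeZero L] : Set (Config L) :=
  {x | numParticles x = k ∧ ∀ u v : Vertex L, adj u v → ¬(x u = true ∧ x v = true)}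

/-- `Ω_k` as a type. -/
abbrev OmegaType (L k : ℕ) [NeZero L] := {x : Config L // x ∈ OmegaSet L k}

/-- `Ω_k` as a finite set of configurations. -/
def omegaFinset (L k : ℕ) [NeZero L] : Finset (Config L) :=
  univ.filter fun x => x ∈ OmegaSet L k

/-- `∪_{i=1}^k Ω_i`. -/
def omegaUnionSet (L k : ℕ) [NeZero L] : Set (Config L) :=
  ⋃ i ∈ Finset.Icc 1 k, OmegaSet L i

/-- `Ω_i ∪ Ω_{i+1}` as a type. -/
abbrev PairType (L i : ℕ) [NeZero L] :=
  {x : Config L // x ∈ OmegaSet L i ∪ OmegaSet L (i + 1)}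

/-- `P_i`: the restriction of the KCIP kernel to `Ω_i ∪ Ω_{i+1}`. -/
def pairKernel (L i : ℕ) [NeZero L] (p : ℝ) : PairType L i → PairType L i → ℝ :=
  fun x y =>
    if x = y then 1 - ∑ z : PairType L i, (if z = x then 0 else kcipKernel L p x.1 z.1)
    else kcipKernel L p x.1 y.1

/-! ### The "perfect" kernel `L^{MH}_{n,k}` on `Ω_{n,k}` -/

/-- The kernel `L^{MH}_{n,k}(x,y) = 1/(2|Ω_{n,k}|) + (1/2)·1_{x=y}`. -/
def perfectKernel (L k : ℕ) [NeZero L] : OmegaType L k → OmegaType L k → ℝ :=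
  fun x y => 1 / (2 * (Fintype.card (OmegaType L k) : ℝ)) + if x = y then 1 / 2 else 0

/-! ### Bernoulli–Laplace diffusion -/

/-- Bernoulli–Laplace kernel `U'_{n,k}`: move a uniformly chosen occupied site to a
uniformly chosen unoccupied site. -/
def blKernel (L k : ℕ) [NeZero L] (x y : Config L) : ℝ :=
  (1 / ((k : ℝ) * ((L : ℝ) ^ 2 - (k : ℝ)))) * ∑ u : Vertex L, ∑ v : Vertex L,
    if x u = true ∧ x v = false ∧
        y = Function.update (Function.update x u false) v true then 1 else 0

/-- `U_{n,k} = (1/2) U'_{n,k} + (1/2) Id`. -/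
def blLazy (L k : ℕ) [NeZero L] (x y : Config L) : ℝ :=
  (1 / 2) * blKernel L k x y + (1 / 2) * (if y = x then 1 else 0)

/-- The Metropolis–Hastings kernel `U^{MH}_{n,k}` on `Ω_{n,k}` with proposal `U_{n,k}`
and target the uniform distribution on `Ω_{n,k}`. -/
def blMH (L k : ℕ) [NeZero L] : OmegaType L k → OmegaType L k → ℝ :=
  fun x y =>
    if x = y then 1 - ∑ z : OmegaType L k, (if z = x then 0 else blLazy L k x.1 z.1)
    else blLazy L k x.1 y.1

/-! ### Simple exclusion -/

/-- Swap the labels of vertices `u` and `v`. -/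
def swapConfig {L : ℕ} (x : Config L) (u v : Vertex L) : Config L :=
  Function.update (Function.update x u (x v)) v (x u)

/-- Kernel of the simple exclusion process on `Λ(L,2)`: pick a uniformly random pair of
adjacent vertices and swap their labels. -/
def seKernel (L : ℕ) [NeZero L] (x y : Config L) : ℝ :=
  (1 / ((univ.filter fun q : Vertex L × Vertex L => adj q.1 q.2).card : ℝ)) *
    ∑ u : Vertex L, ∑ v : Vertex L, if adj u v ∧ y = swapConfig x u v then 1 else 0

/-- Adjacency in the graph `G_SE` whose vertices are configurations and whose edges join
distinct configurations with positive simple-exclusion transition probability. -/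
def seAdj (L : ℕ) (x y : Config L) : Prop :=
  y ≠ x ∧ ∃ u v : Vertex L, adj u v ∧ y = swapConfig x u v

/-- `Q_SE`: the `1/2`-lazy simple random walk on the graph `G_SE`. -/
def seLazy (L : ℕ) [NeZero L] (x y : Config L) : ℝ :=
  (1 / 2) * (if y = x then 1 else 0) +
    (1 / 2) * (if seAdj L x y then 1 / ((univ.filter fun z => seAdj L x z).card : ℝ) else 0)

/-- `Q_MH`: the Metropolis–Hastings kernel on `Ω_{n,k}` with proposal `Q_SE` and target
the uniform distribution on `Ω_{n,k}`. -/
def seMH (L k : ℕ) [NeZero L] : OmegaType L k → OmegaType L k → ℝ :=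
  fun x y =>
    if x = y then 1 - ∑ z : OmegaType L k, (if z = x then 0 else seLazy L x.1 z.1)
    else seLazy L x.1 y.1

/-! ### The projected chain `P̃` -/

/-- `π`-measure of a finite set of configurations. -/
def measOf (L : ℕ) [NeZero L] (p : ℝ) (A : Finset (Config L)) : ℝ :=
  ∑ x ∈ A, kcipStationary L p x

/-- The projected kernel `P̃` on `{1, …, k-1}` (`i : Fin (k-1)` represents `i+1`):
`P̃(i,j) = π((Ω_i ∪ Ω_{i+1}) ∩ (Ω_j ∪ Ω_{j+1})) / (3 π(Ω_i ∪ Ω_{i+1}))` for `i ≠ j`. -/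
def projKernel (L k : ℕ) [NeZero L] (p : ℝ) : Fin (k - 1) → Fin (k - 1) → ℝ :=
  fun i j =>
    if i = j then
      1 - ∑ j' ∈ univ.erase i,
        measOf L p ((omegaFinset L (i.1 + 1) ∪ omegaFinset L (i.1 + 2)) ∩
            (omegaFinset L (j'.1 + 1) ∪ omegaFinset L (j'.1 + 2))) /
          (3 * measOf L p (omegaFinset L (i.1 + 1) ∪ omegaFinset L (i.1 + 2)))
    else
      measOf L p ((omegaFinset L (i.1 + 1) ∪ omegaFinset L (i.1 + 2)) ∩
          (omegaFinset L (j.1 + 1) ∪ omegaFinset L (j.1 + 2))) /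
        (3 * measOf L p (omegaFinset L (i.1 + 1) ∪ omegaFinset L (i.1 + 2)))

/-- Stationary distribution of the projected kernel `P̃`. -/
def projStationary (L k : ℕ) [NeZero L] (p : ℝ) : Fin (k - 1) → ℝ :=
  fun i =>
    measOf L p (omegaFinset L (i.1 + 1) ∪ omegaFinset L (i.1 + 2)) /
      ∑ j : Fin (k - 1), measOf L p (omegaFinset L (j.1 + 1) ∪ omegaFinset L (j.1 + 2))

/-! ### Well-spaced configurations -/

/-- `H(i)`: very well-spaced configurations in `Ω_i`. -/
def Hset (L i : ℕ) [NeZero L] : Set (Config L) :=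
  {x | x ∈ OmegaSet L i ∧ ∀ u v : Vertex L, x u = true → x v = true → u ≠ v →
    Real.sqrt ((L : ℝ) ^ 2) / Real.log ((L : ℝ) ^ 2) ^ ((1 : ℝ) / 4) < (torusDist u v : ℝ)}

/-- `G(i)`: configurations in `Ω_{i+1}` obtained from a configuration in `H(i)` by adding
one particle at distance exactly `2` from the existing particles. -/
def Gset (L i : ℕ) [NeZero L] : Set (Config L) :=
  {y | y ∈ OmegaSet L (i + 1) ∧ ∃ x ∈ Hset L i, ∃ w : Vertex L,
    y = Function.update x w true ∧ (∃ u, x u = true ∧ torusDist u w = 2) ∧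
    ∀ u, x u = true → 2 ≤ torusDist u w}

/-! ### Connectivity on the torus -/

/-- `b` is reachable from `a` by a nearest-neighbour path staying inside `A`. -/
def reachIn {L : ℕ} (A : Set (Vertex L)) (a b : Vertex L) : Prop :=
  ∃ (M : ℕ) (y : ℕ → Vertex L), y 0 = a ∧ y M = b ∧
    (∀ j < M, adj (y j) (y (j + 1))) ∧ ∀ j ≤ M, y j ∈ A

/-- A linear key on the vertices, used to pick one representative per connected component. -/
def vkey (L : ℕ) [NeZero L] (v : Vertex L) : ℕ := v.1.val * L + v.2.val

/-- The number of connected components of the subgraph of `Λ(L,2)` induced by the occupied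
vertices of `x` (counting, in each component, the vertex with the least key). -/
def connCompCount (L : ℕ) [NeZero L] (x : Config L) : ℕ :=
  (univ.filter fun v : Vertex L => x v = true ∧
    ∀ u : Vertex L, x u = true → reachIn {w : Vertex L | x w = true} u v →
      vkey L v ≤ vkey L u).card

/-- `𝒞_s`: the number of collisions before time `s` along a trajectory, i.e. of times
`1 ≤ u < s` at which the number of connected components strictly decreases. -/
def collisionCount (L : ℕ) [NeZero L] {T : ℕ} (ω : Fin (T + 1) → Config L) (s : ℕ) : ℕ :=
  ((Finset.range (s - 1)).filter fun u =>
    connCompCount L (extendPath ω (u + 1)) < connCompCount L (extendPath ω u)).card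

/-! ### Squares, coverings and open vertices -/

/-- A square of side length exactly `m` in the torus, with bottom-left corner `a`. -/
def IsSquareSet (L m : ℕ) [NeZero L] (C : Finset (Vertex L)) : Prop :=
  ∃ a : Vertex L, C = (Finset.range m ×ˢ Finset.range m).image
    fun q : ℕ × ℕ => a + ((q.1 : ZMod L), (q.2 : ZMod L))

/-- A (not necessarily disjoint) union of at most `k` squares of side length exactly `m`. -/
def IsUnionOfSquares (L m k : ℕ) [NeZero L] (C : Finset (Vertex L)) : Prop :=
  ∃ (j : ℕ) (sq : Fin j → Finset (Vertex L)), j ≤ k ∧ (∀ a, IsSquareSet L m (sq a)) ∧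
    C = Finset.univ.biUnion sq

/-- A size-`m` covering of the finite vertex set `X`. -/
structure SizeMCovering (L m : ℕ) [NeZero L] (X : Finset (Vertex L)) {ℓ : ℕ}
    (C : Fin ℓ → Finset (Vertex L)) : Prop where
  pairwise_disjoint : ∀ i j, i ≠ j → Disjoint (C i) (C j)
  union_of_squares : ∀ i, IsUnionOfSquares L m X.card (C i)
  covers : ∀ u : Vertex L, (∃ v ∈ X, torusDist u v ≤ 2) → ∃ i, u ∈ C i
  meets : ∀ i, ∃ v ∈ X, v ∈ C i

/-- The vertex `xi` of the configuration `X` is *open* with respect to the privileged point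
`x'` and the covering `C`: there is a nearest-neighbour path from `xi` to the complement of
the covering which stays at distance `> 1` from `(X ∪ {x'}) \ {xi}`. -/
def IsOpenVertex (L : ℕ) [NeZero L] (X : Finset (Vertex L)) (x' : Vertex L) {ℓ : ℕ}
    (C : Fin ℓ → Finset (Vertex L)) (xi : Vertex L) : Prop :=
  ∃ (M : ℕ) (y : ℕ → Vertex L), y 0 = xi ∧ (∀ i, y M ∉ C i) ∧
    (∀ j < M, torusDist (y (j + 1)) (y j) = 1) ∧
    ∀ x ∈ (insert x' X).erase xi, ∀ j ≤ M, 1 < torusDist x (y j)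

/-- The configuration `{xs 0, …, xs (k-1)}` admits a *sequence of open vertices* with
respect to the privileged point `x'` and the covering `C`. -/
def HasOpenSequence (L k : ℕ) [NeZero L] (xs : Fin k → Vertex L) (x' : Vertex L) {ℓ : ℕ}
    (C : Fin ℓ → Finset (Vertex L)) : Prop :=
  ∃ σ : Equiv.Perm (Fin k), ∀ i : Fin k, i.1 + 1 < k →
    IsOpenVertex L
      ((univ.filter fun j : Fin k => ∀ j' : Fin k, j' < i → σ j' ≠ j).image xs)
      x' C (xs (σ i))

/-! ### Metropolis–Hastings walk on a component (for Statement 9) -/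

/-- The Metropolis–Hastings chain on `D` whose proposal is the `1/2`-lazy simple random
walk on `Λ(L,2)` and whose target is the uniform distribution on `D`: each neighbour in `D`
is moved to with probability `1/8`, otherwise the chain holds. -/
def dKernel (L : ℕ) [NeZero L] (D : Finset (Vertex L)) :
    {u // u ∈ D} → {u // u ∈ D} → ℝ :=
  fun x y =>
    if x = y then 1 - ((D.filter fun w => adj w x.1).card : ℝ) / 8
    else if adj x.1 y.1 then 1 / 8 else 0


/-! ### The radial profile -/

/-- The radial profile of the pair potential, as a function of the (shifted) squared distance `s`,
with cutoff `R`: it is `q - 1 - log q` with `q = s / R` up to the cutoff, and zero beyond. -/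
def phi (R s : ℝ) : ℝ := if s ≤ R then s / R - 1 - Real.log (s / R) else 0

lemma phi_nonneg {R s : ℝ} (hR : 0 < R) (hs : 0 < s) : 0 ≤ phi R s := by
  unfold phi
  split_ifs
  · have := Real.log_le_sub_one_of_pos (div_pos hs hR)
    linarith
  · exact le_rfl

/-- The untruncated profile `q - 1 - log q` is nonnegative, so it dominates `phi` also beyond the
cutoff. -/
lemma phi_le {R s : ℝ} (hR : 0 < R) (hs : 0 < s) :
    phi R s ≤ s / R - 1 - (Real.log s - Real.log R) := by
  rw [← Real.log_div hs.ne' hR.ne']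
  unfold phi
  split_ifs
  · exact le_rfl
  · have := Real.log_le_sub_one_of_pos (div_pos hs hR)
    linarith

lemma phi_eq {R s : ℝ} (hR : 0 < R) (hs : 0 < s) (h : s ≤ R) :
    phi R s = s / R - 1 - (Real.log s - Real.log R) := by
  rw [← Real.log_div hs.ne' hR.ne', phi, if_pos h]

/-- `log (x² + y² + 1/2)` is subharmonic for the discrete Laplacian; the shift by `1/2` absorbs the
fourth-order error of the discretization. -/
lemma log_subharmonic (x y : ℝ) :
    4 * Real.log (x ^ 2 + y ^ 2 + 1 / 2) ≤
      Real.log ((x + 1) ^ 2 + y ^ 2 + 1 / 2) + Real.log ((x - 1) ^ 2 + y ^ 2 + 1 / 2) +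
      Real.log (x ^ 2 + (y + 1) ^ 2 + 1 / 2) + Real.log (x ^ 2 + (y - 1) ^ 2 + 1 / 2) := by
  have h1 : 0 < (x + 1) ^ 2 + y ^ 2 + 1 / 2 := by positivity
  have h2 : 0 < (x - 1) ^ 2 + y ^ 2 + 1 / 2 := by positivity
  have h3 : 0 < x ^ 2 + (y + 1) ^ 2 + 1 / 2 := by positivity
  have h4 : 0 < x ^ 2 + (y - 1) ^ 2 + 1 / 2 := by positivity
  have h0 : 0 < x ^ 2 + y ^ 2 + 1 / 2 := by positivity
  rw [← Real.log_mul h1.ne' h2.ne', ← Real.log_mul (by positivity) h3.ne',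
    ← Real.log_mul (by positivity) h4.ne']
  have : (4 : ℝ) * Real.log (x ^ 2 + y ^ 2 + 1 / 2) = Real.log ((x ^ 2 + y ^ 2 + 1 / 2) ^ 4) := by
    rw [Real.log_pow]; norm_num
  rw [this]
  apply Real.log_le_log (by positivity)
  -- with `s = x ^ 2 + y ^ 2 + 1 / 2` the difference is `4 s + 3 + 16 x ^ 2 y ^ 2`
  have : ((x + 1) ^ 2 + y ^ 2 + 1 / 2) * ((x - 1) ^ 2 + y ^ 2 + 1 / 2) *
      (x ^ 2 + (y + 1) ^ 2 + 1 / 2) * (x ^ 2 + (y - 1) ^ 2 + 1 / 2) -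
      (x ^ 2 + y ^ 2 + 1 / 2) ^ 4 =
      4 * (x ^ 2 + y ^ 2 + 1 / 2) + 3 + 16 * (x ^ 2 * y ^ 2) := by ring
  have h5 : 0 ≤ x ^ 2 * y ^ 2 := by positivity
  linarith

lemma phi_laplacian_inside {R : ℝ} (hR : 0 < R) (x y : ℝ) (h : x ^ 2 + y ^ 2 + 1 / 2 ≤ R) :
    phi R ((x + 1) ^ 2 + y ^ 2 + 1 / 2) + phi R ((x - 1) ^ 2 + y ^ 2 + 1 / 2) +
      phi R (x ^ 2 + (y + 1) ^ 2 + 1 / 2) + phi R (x ^ 2 + (y - 1) ^ 2 + 1 / 2) -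
      4 * phi R (x ^ 2 + y ^ 2 + 1 / 2) ≤ 4 / R := by
  have h1 := phi_le hR (s := (x + 1) ^ 2 + y ^ 2 + 1 / 2) (by positivity)
  have h2 := phi_le hR (s := (x - 1) ^ 2 + y ^ 2 + 1 / 2) (by positivity)
  have h3 := phi_le hR (s := x ^ 2 + (y + 1) ^ 2 + 1 / 2) (by positivity)
  have h4 := phi_le hR (s := x ^ 2 + (y - 1) ^ 2 + 1 / 2) (by positivity)
  rw [phi_eq hR (by positivity) h]
  have h5 := log_subharmonic x y
  have h6 : ((x + 1) ^ 2 + y ^ 2 + 1 / 2) / R + ((x - 1) ^ 2 + y ^ 2 + 1 / 2) / R +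
      (x ^ 2 + (y + 1) ^ 2 + 1 / 2) / R + (x ^ 2 + (y - 1) ^ 2 + 1 / 2) / R -
      4 * ((x ^ 2 + y ^ 2 + 1 / 2) / R) = 4 / R := by ring
  linarith

/-- One lattice step below the cutoff the profile is still `O(1 / R)`. Here `t` is the shifted
squared norm of a neighbour beyond the cutoff, and `x` is, up to sign, the coordinate in which the
two sites differ. -/
lemma phi_boundary {R s t x : ℝ} (hR : 0 < R) (hs : 1 / 2 ≤ s) (hx : x ^ 2 ≤ s)
    (ht : t = s + 1 + 2 * x) (hRt : R < t) : phi R s ≤ 12 / R := by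
  have hs0 : 0 < s := by linarith
  unfold phi
  split_ifs with h
  · have h1 := Real.log_le_sub_one_of_pos (div_pos hR hs0)
    rw [← inv_div, Real.log_inv] at h1
    have h2 : (R - s) ^ 2 ≤ 12 * s := by
      have : (R - s) ^ 2 ≤ (1 + 2 * x) ^ 2 :=
        pow_le_pow_left₀ (by linarith) (by linarith) 2
      nlinarith [sq_nonneg (1 - 2 * x)]
    have h3 : s / R - 2 + (s / R)⁻¹ = (R - s) ^ 2 / (s * R) := by
      field_simp; ring
    have h4 : (R - s) ^ 2 / (s * R) ≤ 12 / R := by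
      rw [div_le_div_iff₀ (by positivity) hR]
      nlinarith
    linarith
  · positivity

/-! ### The pair potential on the torus -/

/-- The squared Euclidean norm of the minimal lift to `ℤ²` of a torus point, plus `1 / 2`. -/
def sqn {L : ℕ} (z : Vertex L) : ℝ :=
  (z.1.valMinAbs : ℝ) ^ 2 + (z.2.valMinAbs : ℝ) ^ 2 + 1 / 2

/-- The pair potential on the torus, a function of the difference of two sites. -/
def pot {L : ℕ} (R : ℝ) (z : Vertex L) : ℝ := phi R (sqn z)

lemma sqn_ge {L : ℕ} (z : Vertex L) : 1 / 2 ≤ sqn z := by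
  have : 0 ≤ (z.1.valMinAbs : ℝ) ^ 2 + (z.2.valMinAbs : ℝ) ^ 2 := by positivity
  unfold sqn; linarith

lemma pot_nonneg {L : ℕ} {R : ℝ} (hR : 0 < R) (z : Vertex L) : 0 ≤ pot R z :=
  phi_nonneg hR (by have := sqn_ge z; linarith)

lemma pot_zero_of_lt {L : ℕ} {R : ℝ} {z : Vertex L} (h : R < sqn z) : pot R z = 0 := by
  rw [pot, phi, if_neg (not_le.mpr h)]

lemma valMinAbs_sq_neg {L : ℕ} (a : ZMod L) :
    ((-a).valMinAbs : ℝ) ^ 2 = (a.valMinAbs : ℝ) ^ 2 := by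
  have h := ZMod.natAbs_valMinAbs_neg a
  rw [Int.natAbs_eq_iff_sq_eq] at h
  exact_mod_cast h

lemma sqn_neg {L : ℕ} (z : Vertex L) : sqn (-z) = sqn z := by
  simp only [sqn, Prod.fst_neg, Prod.snd_neg, valMinAbs_sq_neg]

lemma pot_neg {L : ℕ} (R : ℝ) (z : Vertex L) : pot R (-z) = pot R z := by
  rw [pot, sqn_neg, pot]

lemma pot_sub_comm {L : ℕ} (R : ℝ) (u v : Vertex L) : pot R (u - v) = pot R (v - u) := by
  rw [← pot_neg, neg_sub]

/-- Away from the cut locus minimal lifts commute with unit shifts. -/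
lemma valMinAbs_shift {L : ℕ} [NeZero L] (hL : 5 ≤ L) (a : ZMod L)
    (ha : (a.valMinAbs : ℝ) ^ 2 ≤ (L : ℝ) ^ 2 / 16) :
    (a + 1).valMinAbs = a.valMinAbs + 1 ∧ (a - 1).valMinAbs = a.valMinAbs - 1 := by
  have h1 : |(a.valMinAbs : ℝ)| ≤ (L : ℝ) / 4 :=
    abs_le_of_sq_le_sq (by linarith [div_pow (L : ℝ) 4 2]) (by positivity)
  have h2 := abs_le.mp h1
  have h3 : 4 * a.valMinAbs ≤ L := by
    have : 4 * (a.valMinAbs : ℝ) ≤ L := by linarith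
    exact_mod_cast this
  have h4 : -(L : ℤ) ≤ 4 * a.valMinAbs := by
    have : -(L : ℝ) ≤ 4 * (a.valMinAbs : ℝ) := by linarith
    exact_mod_cast this
  constructor
  · rw [ZMod.valMinAbs_spec]
    refine ⟨by simp, ?_⟩
    constructor <;> omega
  · rw [ZMod.valMinAbs_spec]
    refine ⟨by simp, ?_⟩
    constructor <;> omega

lemma sqn_shift {L : ℕ} [NeZero L] (hL : 5 ≤ L) {R : ℝ} (hRL : R ≤ (L : ℝ) ^ 2 / 16)
    (z : Vertex L) (hz : sqn z ≤ R) :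
    sqn (z + (1, 0)) = ((z.1.valMinAbs : ℝ) + 1) ^ 2 + (z.2.valMinAbs : ℝ) ^ 2 + 1 / 2 ∧
    sqn (z - (1, 0)) = ((z.1.valMinAbs : ℝ) - 1) ^ 2 + (z.2.valMinAbs : ℝ) ^ 2 + 1 / 2 ∧
    sqn (z + (0, 1)) = (z.1.valMinAbs : ℝ) ^ 2 + ((z.2.valMinAbs : ℝ) + 1) ^ 2 + 1 / 2 ∧
    sqn (z - (0, 1)) = (z.1.valMinAbs : ℝ) ^ 2 + ((z.2.valMinAbs : ℝ) - 1) ^ 2 + 1 / 2 := by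
  unfold sqn at hz
  have h1 := valMinAbs_shift hL z.1 (by nlinarith [sq_nonneg (z.2.valMinAbs : ℝ)])
  have h2 := valMinAbs_shift hL z.2 (by nlinarith [sq_nonneg (z.1.valMinAbs : ℝ)])
  refine ⟨?_, ?_, ?_, ?_⟩ <;> simp [sqn, h1.1, h1.2, h2.1, h2.2]

lemma pot_boundary {L : ℕ} [NeZero L] (hL : 5 ≤ L) {R : ℝ} (hR : 0 < R)
    (hRL : R ≤ (L : ℝ) ^ 2 / 16) (z z' : Vertex L) (hz : R < sqn z)
    (h : z = z' + (1, 0) ∨ z = z' - (1, 0) ∨ z = z' + (0, 1) ∨ z = z' - (0, 1)) :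
    pot R z' ≤ 12 / R := by
  by_cases hz' : sqn z' ≤ R
  · obtain ⟨h1, h2, h3, h4⟩ := sqn_shift hL hRL z' hz'
    have hs := sqn_ge z'
    have hx : (z'.1.valMinAbs : ℝ) ^ 2 ≤ sqn z' := by
      unfold sqn; nlinarith [sq_nonneg (z'.2.valMinAbs : ℝ)]
    have hy : (z'.2.valMinAbs : ℝ) ^ 2 ≤ sqn z' := by
      unfold sqn; nlinarith [sq_nonneg (z'.1.valMinAbs : ℝ)]
    rcases h with rfl | rfl | rfl | rfl
    · exact phi_boundary (x := z'.1.valMinAbs) hR hs hx (by rw [h1, sqn]; ring) hz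
    · exact phi_boundary (x := -z'.1.valMinAbs) hR hs (by simpa using hx)
        (by rw [h2, sqn]; ring) hz
    · exact phi_boundary (x := z'.2.valMinAbs) hR hs hy (by rw [h3, sqn]; ring) hz
    · exact phi_boundary (x := -z'.2.valMinAbs) hR hs (by simpa using hy)
        (by rw [h4, sqn]; ring) hz
  · rw [pot_zero_of_lt (not_le.mp hz')]; positivity

lemma pot_laplacian {L : ℕ} [NeZero L] (hL : 5 ≤ L) {R : ℝ} (hR : 0 < R)
    (hRL : R ≤ (L : ℝ) ^ 2 / 16) (z : Vertex L) :
    pot R (z + (1, 0)) + pot R (z - (1, 0)) + pot R (z + (0, 1)) + pot R (z - (0, 1)) -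
      4 * pot R z ≤ 48 / R := by
  by_cases hz : sqn z ≤ R
  · obtain ⟨h1, h2, h3, h4⟩ := sqn_shift hL hRL z hz
    have := phi_laplacian_inside hR z.1.valMinAbs z.2.valMinAbs hz
    simp only [pot, h1, h2, h3, h4]
    have h5 : 4 / R ≤ 48 / R := by gcongr; norm_num
    exact this.trans h5
  · push Not at hz
    have h0 := pot_nonneg hR z
    have h1 := pot_boundary hL hR hRL z (z + (1, 0)) hz (by simp)
    have h2 := pot_boundary hL hR hRL z (z - (1, 0)) hz (by simp)
    have h3 := pot_boundary hL hR hRL z (z + (0, 1)) hz (by simp)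
    have h4 := pot_boundary hL hR hRL z (z - (0, 1)) hz (by simp)
    have : 48 / R = 12 / R + 12 / R + 12 / R + 12 / R := by ring
    linarith

lemma zdist_eq {L : ℕ} [NeZero L] (a b : ZMod L) : zdist a b = (a - b).valMinAbs.natAbs := by
  have h : b - a = -(a - b) := by ring
  rw [zdist, h, ZMod.valMinAbs_natAbs_eq_min, ZMod.neg_val]
  split_ifs with h0
  · simp [h0]
  · rfl

lemma torusDist_eq {L : ℕ} [NeZero L] (u v : Vertex L) :
    torusDist u v = (u - v).1.valMinAbs.natAbs + (u - v).2.valMinAbs.natAbs := by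
  rw [torusDist, zdist_eq, zdist_eq]; rfl

lemma torusDist_comm {L : ℕ} [NeZero L] (u v : Vertex L) : torusDist u v = torusDist v u := by
  simp only [torusDist, zdist]
  rw [min_comm, min_comm (u.2 - v.2).val]

lemma torusDist_triangle {L : ℕ} [NeZero L] (u v w : Vertex L) :
    torusDist u w ≤ torusDist u v + torusDist v w := by
  have h1 : ∀ a b c : ZMod L, (a - c).valMinAbs.natAbs ≤
      (a - b).valMinAbs.natAbs + (b - c).valMinAbs.natAbs := by
    intro a b c
    have := ZMod.natAbs_valMinAbs_add_le (a - b) (b - c)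
    rw [sub_add_sub_cancel] at this
    exact this.trans (Int.natAbs_add_le _ _)
  rw [torusDist_eq, torusDist_eq, torusDist_eq]
  have h2 := h1 u.1 v.1 w.1
  have h3 := h1 u.2 v.2 w.2
  simp only [Prod.fst_sub, Prod.snd_sub]
  omega

/-- Pairs at large graph distance do not contribute to the potential. -/
lemma pot_far {L : ℕ} [NeZero L] {R d : ℝ} {u v : Vertex L} (hd : 0 ≤ d) (hdR : 2 * R ≤ d ^ 2)
    (h : d ≤ torusDist u v) : pot R (u - v) = 0 := by
  apply pot_zero_of_lt
  rw [torusDist_eq] at h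
  push_cast [Nat.cast_natAbs] at h
  rw [sqn, ← sq_abs ((u - v).1.valMinAbs : ℝ), ← sq_abs ((u - v).2.valMinAbs : ℝ)]
  have := pow_le_pow_left₀ hd h 2
  nlinarith [sq_nonneg (|((u - v).1.valMinAbs : ℝ)| - |((u - v).2.valMinAbs : ℝ)|)]

lemma pot_adj {L : ℕ} [NeZero L] (hL : 5 ≤ L) (R : ℝ) {u v : Vertex L} (h : adj u v) :
    pot R (u - v) = phi R (3 / 2) := by
  have h1 : (1 : ZMod L).valMinAbs = 1 := by
    rw [ZMod.valMinAbs_spec]; refine ⟨by simp, ?_⟩; constructor <;> omega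
  have h2 : sqn ((1, 0) : Vertex L) = 3 / 2 := by simp [sqn, h1]; norm_num
  have h3 : sqn ((0, 1) : Vertex L) = 3 / 2 := by simp [sqn, h1]; norm_num
  rcases h with h | h | h | h
  · rw [h, pot, h2]
  · rw [h, pot, h3]
  · rw [pot_sub_comm, h, pot, h2]
  · rw [pot_sub_comm, h, pot, h3]

/-- At graph distance two the potential has dropped by a definite amount. -/
lemma pot_two {L : ℕ} [NeZero L] {R : ℝ} (hR : 100 ≤ R) {u v : Vertex L}
    (h : torusDist u v = 2) : pot R (u - v) ≤ phi R (3 / 2) - 1 / 4 := by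
  have hR0 : 0 < R := by linarith
  rw [torusDist_eq] at h
  set a := (u - v).1.valMinAbs with ha
  set b := (u - v).2.valMinAbs with hb
  have hs : sqn (u - v) = 5 / 2 ∨ sqn (u - v) = 9 / 2 := by
    have hab : a ^ 2 + b ^ 2 = 2 ∨ a ^ 2 + b ^ 2 = 4 := by
      rw [← Int.natAbs_sq a, ← Int.natAbs_sq b]
      have h1 : a.natAbs ≤ 2 := by omega
      have h2 : b.natAbs = 2 - a.natAbs := by omega
      rw [h2]
      interval_cases a.natAbs <;> simp
    have e : sqn (u - v) = ((a ^ 2 + b ^ 2 : ℤ) : ℝ) + 1 / 2 := by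
      rw [sqn, ← ha, ← hb]; push_cast; ring
    rcases hab with h | h
    · left; rw [e, h]; norm_num
    · right; rw [e, h]; norm_num
  have h3 : ∀ s : ℝ, 5 / 2 ≤ s → s ≤ 9 / 2 → phi R s ≤ phi R (3 / 2) - 1 / 4 := by
    intro s hs1 hs2
    have hs0 : 0 < s := by linarith
    rw [phi_eq hR0 hs0 (by linarith), phi_eq hR0 (by norm_num) (by linarith)]
    have h1 := Real.log_le_sub_one_of_pos (show 0 < (3 / 2) / s by positivity)
    rw [Real.log_div (by norm_num) hs0.ne'] at h1
    have h2 : (3 / 2) / s ≤ 3 / 5 := by rw [div_le_iff₀ hs0]; linarith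
    have h3 : s / R - (3 / 2) / R ≤ 3 / 100 := by
      rw [← sub_div, div_le_iff₀ hR0]; nlinarith
    linarith
  rcases hs with hs | hs <;> rw [pot, hs] <;> exact h3 _ (by norm_num) (by norm_num)

/-! ### Survival probabilities -/

section Generic

variable {S : Type*} [Fintype S]

/-- Lower bound on a survival probability from a function `F` that is a submartingale up to an
additive drift `-ε` off `A`, is nonpositive on `A` and is bounded by `B`. The predicate `P` is an
invariant of the chain. -/
lemma survProb_lower (K : S → S → ℝ) (hK : ∀ x y, 0 ≤ K x y) (hK1 : ∀ x, ∑ y, K x y = 1)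
    (A : Set S) (P : S → Prop) (hP : ∀ x y, P x → K x y ≠ 0 → P y) (z : S) (hz : P z)
    (hzA : z ∉ A) (F : S → ℝ) (B ε : ℝ) (hε : 0 ≤ ε) (hB : ∀ x, F x ≤ B)
    (hA : ∀ x ∈ A, F x ≤ 0) (hF : ∀ x, P x → x ∉ A → F x - ε ≤ ∑ y, K x y * F y) (T : ℕ) :
    F z - T * ε ≤ B * survProb K z A T := by
  have hnn : ∀ t y, 0 ≤ killedDist K z A t y := by
    intro t
    induction t with
    | zero => intro y; simp only [killedDist]; split_ifs <;> norm_num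
    | succ t ih =>
      intro y
      simp only [killedDist]
      split_ifs
      · exact le_rfl
      · exact Finset.sum_nonneg fun x _ => mul_nonneg (ih x) (hK x y)
  have hsupp : ∀ t y, killedDist K z A t y ≠ 0 → P y ∧ y ∉ A := by
    intro t
    induction t with
    | zero =>
      intro y hy
      simp only [killedDist, ne_eq, ite_eq_right_iff, not_forall] at hy
      obtain ⟨⟨rfl, h⟩, -⟩ := hy
      exact ⟨hz, h⟩
    | succ t ih =>
      intro y hy
      simp only [killedDist] at hy
      split_ifs at hy with h
      · exact absurd rfl hy
      · obtain ⟨x, -, hx⟩ := Finset.exists_ne_zero_of_sum_ne_zero hy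
        exact ⟨hP x y (ih x (left_ne_zero_of_mul hx)).1 (right_ne_zero_of_mul hx), h⟩
  have hmass : ∀ t, ∑ y, killedDist K z A t y ≤ 1 := by
    intro t
    induction t with
    | zero => simp [killedDist, hzA, ite_and]
    | succ t ih =>
      calc ∑ y, killedDist K z A (t + 1) y
          ≤ ∑ y, ∑ x, killedDist K z A t x * K x y := by
            refine Finset.sum_le_sum fun y _ => ?_
            simp only [killedDist]
            split_ifs
            · exact Finset.sum_nonneg fun x _ => mul_nonneg (hnn t x) (hK x y)
            · exact le_rfl
        _ = ∑ x, killedDist K z A t x := by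
            rw [Finset.sum_comm]
            simp [← Finset.mul_sum, hK1]
        _ ≤ 1 := ih
  have hmain : ∀ t : ℕ, F z - t * ε ≤ ∑ y, killedDist K z A t y * F y := by
    intro t
    induction t with
    | zero => simp [killedDist, hzA, ite_and]
    | succ t ih =>
      calc F z - ((t + 1 : ℕ) : ℝ) * ε ≤ ∑ y, killedDist K z A t y * F y - 1 * ε := by
            push_cast; linarith
        _ ≤ ∑ x, killedDist K z A t x * F x - (∑ x, killedDist K z A t x) * ε := by
            have := mul_le_mul_of_nonneg_right (hmass t) hε
            linarith
        _ = ∑ x, killedDist K z A t x * (F x - ε) := by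
            simp only [mul_sub, Finset.sum_sub_distrib, Finset.sum_mul]
        _ ≤ ∑ x, killedDist K z A t x * ∑ y, K x y * F y := by
            refine Finset.sum_le_sum fun x _ => ?_
            by_cases h : killedDist K z A t x = 0
            · simp [h]
            · exact mul_le_mul_of_nonneg_left (hF x (hsupp t x h).1 (hsupp t x h).2) (hnn t x)
        _ = ∑ y, (∑ x, killedDist K z A t x * K x y) * F y := by
            simp only [Finset.mul_sum, Finset.sum_mul]
            rw [Finset.sum_comm]
            simp only [mul_assoc]
        _ ≤ ∑ y, killedDist K z A (t + 1) y * F y := by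
            refine Finset.sum_le_sum fun y _ => ?_
            simp only [killedDist]
            split_ifs with h
            · rw [zero_mul]
              exact mul_nonpos_of_nonneg_of_nonpos
                (Finset.sum_nonneg fun x _ => mul_nonneg (hnn t x) (hK x y)) (hA y h)
            · exact le_rfl
  calc F z - T * ε ≤ ∑ y, killedDist K z A T y * F y := hmain T
    _ ≤ ∑ y, killedDist K z A T y * B :=
        Finset.sum_le_sum fun y _ => mul_le_mul_of_nonneg_left (hB y) (hnn T y)
    _ = B * survProb K z A T := by rw [← Finset.sum_mul, mul_comm, survProb]

end Generic

/-! ### The simple exclusion kernel and the energy -/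

/-- The number of ordered pairs of adjacent vertices. -/
def numAdj (L : ℕ) [NeZero L] : ℝ :=
  ((univ.filter fun q : Vertex L × Vertex L => adj q.1 q.2).card : ℝ)

lemma numAdj_ge (L : ℕ) [NeZero L] : (L : ℝ) ^ 2 ≤ numAdj L := by
  have h : (univ : Finset (Vertex L)).card ≤
      (univ.filter fun q : Vertex L × Vertex L => adj q.1 q.2).card := by
    refine Finset.card_le_card_of_injOn (fun u => (u + (1, 0), u)) ?_ ?_
    · intro u _
      have h : adj (u + (1, 0)) u := Or.inl (by simp)
      simpa using h
    · intro u _ v _ h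
      exact (Prod.ext_iff.mp h).2
  have h2 : (univ : Finset (Vertex L)).card = L ^ 2 := by
    rw [Finset.card_univ, Fintype.card_prod, ZMod.card, sq]
  rw [h2] at h
  unfold numAdj
  exact_mod_cast h

lemma numAdj_pos (L : ℕ) [NeZero L] : 0 < numAdj L := by
  have h : 0 < (L : ℝ) := by exact_mod_cast NeZero.pos L
  exact lt_of_lt_of_le (by positivity) (numAdj_ge L)

lemma numAdj_eq_sum (L : ℕ) [NeZero L] :
    numAdj L = ∑ u : Vertex L, ∑ v : Vertex L, if adj u v then (1 : ℝ) else 0 := by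
  rw [numAdj, ← Fintype.sum_prod_type' (f := fun u v : Vertex L => if adj u v then (1 : ℝ) else 0)]
  simp

lemma sum_seKernel_mul (L : ℕ) [NeZero L] (x : Config L) (F : Config L → ℝ) :
    ∑ y, seKernel L x y * F y =
      1 / numAdj L * ∑ u : Vertex L, ∑ v : Vertex L,
        if adj u v then F (swapConfig x u v) else 0 := by
  simp only [seKernel, mul_assoc, ← Finset.mul_sum, Finset.sum_mul]
  rw [← numAdj]
  congr 1
  rw [Finset.sum_comm]
  refine Finset.sum_congr rfl fun u _ => ?_
  rw [Finset.sum_comm]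
  refine Finset.sum_congr rfl fun v _ => ?_
  by_cases h : adj u v <;> simp [h]

lemma seKernel_nonneg (L : ℕ) [NeZero L] (x y : Config L) : 0 ≤ seKernel L x y := by
  unfold seKernel
  refine mul_nonneg (by positivity) (Finset.sum_nonneg fun u _ => Finset.sum_nonneg fun v _ => ?_)
  split_ifs <;> norm_num

lemma seKernel_sum (L : ℕ) [NeZero L] (x : Config L) : ∑ y, seKernel L x y = 1 := by
  have h := sum_seKernel_mul L x (fun _ => 1)
  simp only [mul_one] at h
  rw [h, ← numAdj_eq_sum, one_div, inv_mul_cancel₀ (numAdj_pos L).ne']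

lemma swapConfig_eq {L : ℕ} (x : Config L) (u v : Vertex L) :
    swapConfig x u v = fun a => x (Equiv.swap u v a) := by
  funext a
  unfold swapConfig
  by_cases hv : a = v
  · subst hv; simp
  · by_cases hu : a = u
    · subst hu; simp [hv]
    · simp [hu, hv, Equiv.swap_apply_of_ne_of_ne]

lemma numParticles_swap {L : ℕ} [NeZero L] (x : Config L) (u v : Vertex L) :
    numParticles (swapConfig x u v) = numParticles x := by
  rw [swapConfig_eq]
  unfold numParticles
  rw [Finset.card_filter, Finset.card_filter]
  exact Equiv.sum_comp (Equiv.swap u v) (fun a => if x a = true then 1 else 0)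

lemma seKernel_numParticles {L : ℕ} [NeZero L] (x y : Config L) (h : seKernel L x y ≠ 0) :
    numParticles y = numParticles x := by
  obtain ⟨u, -, hu⟩ := Finset.exists_ne_zero_of_sum_ne_zero (right_ne_zero_of_mul h)
  obtain ⟨v, -, hv⟩ := Finset.exists_ne_zero_of_sum_ne_zero hu
  simp only [ne_eq, ite_eq_right_iff, not_forall] at hv
  obtain ⟨⟨-, rfl⟩, -⟩ := hv
  exact numParticles_swap x u v

/-- The total pair energy of a configuration, each pair being counted in both orders. -/
def energy {L : ℕ} [NeZero L] (R : ℝ) (x : Config L) : ℝ :=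
  ∑ a : Vertex L, ∑ b : Vertex L,
    if x a = true ∧ x b = true ∧ a ≠ b then pot R (a - b) else 0

lemma energy_nonneg {L : ℕ} [NeZero L] {R : ℝ} (hR : 0 < R) (x : Config L) : 0 ≤ energy R x := by
  refine Finset.sum_nonneg fun a _ => Finset.sum_nonneg fun b _ => ?_
  split_ifs
  · exact pot_nonneg hR _
  · exact le_rfl

lemma energy_swap {L : ℕ} [NeZero L] (R : ℝ) (x : Config L) (u v : Vertex L) :
    energy R (swapConfig x u v) = ∑ a : Vertex L, ∑ b : Vertex L,
      if x a = true ∧ x b = true ∧ a ≠ b then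
        pot R (Equiv.swap u v a - Equiv.swap u v b) else 0 := by
  rw [swapConfig_eq, energy]
  rw [← Equiv.sum_comp (Equiv.swap u v)]
  refine Finset.sum_congr rfl fun a _ => ?_
  rw [← Equiv.sum_comp (Equiv.swap u v)]
  refine Finset.sum_congr rfl fun b _ => ?_
  simp

lemma adj_comm {L : ℕ} (u v : Vertex L) : adj u v ↔ adj v u := by
  unfold adj; tauto

lemma adj_irrefl {L : ℕ} (hL : 5 ≤ L) (u : Vertex L) : ¬ adj u u := by
  have : Fact (1 < L) := ⟨by omega⟩
  simp [adj, Prod.ext_iff]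

/-- Sum over the four neighbours of a vertex. -/
lemma sum_adj {L : ℕ} [NeZero L] (hL : 5 ≤ L) (a : Vertex L) (g : Vertex L → ℝ) :
    (∑ v : Vertex L, if adj a v then g v else 0) =
      g (a + (1, 0)) + g (a - (1, 0)) + g (a + (0, 1)) + g (a - (0, 1)) := by
  have : Fact (1 < L) := ⟨by omega⟩
  have h2 : (2 : ZMod L) ≠ 0 := by
    intro h
    have h3 : ((2 : ℕ) : ZMod L) = 0 := by exact_mod_cast h
    rw [ZMod.natCast_eq_zero_iff] at h3
    have := Nat.le_of_dvd (by norm_num) h3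
    omega
  have hne : (1 : ZMod L) ≠ -1 := by
    intro h
    apply h2
    linear_combination h
  have hset : (univ.filter fun v : Vertex L => adj a v) =
      {a + (1, 0), a - (1, 0), a + (0, 1), a - (0, 1)} := by
    ext v
    simp only [mem_filter, mem_univ, true_and, mem_insert, mem_singleton]
    unfold adj
    constructor
    · rintro (h | h | h | h)
      · right; left; rw [← h]; abel
      · right; right; right; rw [← h]; abel
      · left; rw [← h]; abel
      · right; right; left; rw [← h]; abel
    · rintro (rfl | rfl | rfl | rfl) <;> simp
  rw [← Finset.sum_filter, hset]
  rw [Finset.sum_insert, Finset.sum_insert, Finset.sum_insert, Finset.sum_singleton]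
  · ring
  · simp only [mem_singleton]
    intro h
    have := congrArg Prod.snd h
    simp [sub_eq_add_neg] at this
    exact hne this
  · simp only [mem_insert, mem_singleton, not_or]
    constructor <;> intro h <;> simpa using congrArg Prod.fst h
  · simp only [mem_insert, mem_singleton, not_or]
    refine ⟨fun h => ?_, fun h => ?_, fun h => ?_⟩
    · have := congrArg Prod.fst h
      simp [sub_eq_add_neg] at this
      exact hne this
    · simpa using congrArg Prod.fst h
    · simpa using congrArg Prod.fst h

/-! ### Drift of the energy -/

lemma sum_adj_pot_le {L : ℕ} [NeZero L] (hL : 5 ≤ L) {R : ℝ} (hR : 0 < R)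
    (hRL : R ≤ (L : ℝ) ^ 2 / 16) (a b : Vertex L) :
    (∑ v : Vertex L, if adj a v then pot R (v - b) - pot R (a - b) else 0) ≤ 48 / R := by
  rw [sum_adj hL]
  have h := pot_laplacian hL hR hRL (a - b)
  have e1 : a + (1, 0) - b = a - b + (1, 0) := by abel
  have e2 : a - (1, 0) - b = a - b - (1, 0) := by abel
  have e3 : a + (0, 1) - b = a - b + (0, 1) := by abel
  have e4 : a - (0, 1) - b = a - b - (0, 1) := by abel
  rw [e1, e2, e3, e4]
  linarith

/-- Effect on the potential of a nonadjacent pair of exchanging the two ends of an edge. At most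
one of the two particles is moved. -/
lemma pot_swap_sub {L : ℕ} (hL : 5 ≤ L) (R : ℝ) {u v a b : Vertex L} (huv : adj u v)
    (hab : a ≠ b) (hnadj : ¬ adj a b) :
    pot R (Equiv.swap u v a - Equiv.swap u v b) - pot R (a - b) =
      (if u = a then pot R (v - b) - pot R (a - b) else 0) +
      (if v = a then pot R (u - b) - pot R (a - b) else 0) +
      (if u = b then pot R (v - a) - pot R (b - a) else 0) +
      (if v = b then pot R (u - a) - pot R (b - a) else 0) := by
  have huv' : u ≠ v := fun h => adj_irrefl hL v (h ▸ huv)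
  by_cases h1 : u = a
  · subst h1
    have h2 : v ≠ b := fun h => hnadj (h ▸ huv)
    simp [huv'.symm, hab, h2, Equiv.swap_apply_of_ne_of_ne hab.symm h2.symm]
  by_cases h2 : v = a
  · subst h2
    have h3 : u ≠ b := fun h => hnadj ((adj_comm _ _).mp (h ▸ huv))
    simp [huv', hab, h3, Equiv.swap_apply_of_ne_of_ne h3.symm hab.symm]
  rw [Equiv.swap_apply_of_ne_of_ne (Ne.symm h1) (Ne.symm h2)]
  by_cases h3 : u = b
  · subst h3
    simp [huv'.symm, h1, h2, pot_sub_comm R a]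
  by_cases h4 : v = b
  · subst h4
    simp [huv', h1, h2, pot_sub_comm R a]
  rw [Equiv.swap_apply_of_ne_of_ne (Ne.symm h3) (Ne.symm h4)]
  simp [h1, h2, h3, h4]

/-- Summing over ordered edges produces the Laplacian of the potential four times: twice for each
of the two particles. -/
lemma sum_pot_swap_le {L : ℕ} [NeZero L] (hL : 5 ≤ L) {R : ℝ} (hR : 0 < R)
    (hRL : R ≤ (L : ℝ) ^ 2 / 16) {a b : Vertex L} (hab : a ≠ b) (hnadj : ¬ adj a b) :
    (∑ u : Vertex L, ∑ v : Vertex L, if adj u v then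
      pot R (Equiv.swap u v a - Equiv.swap u v b) - pot R (a - b) else 0) ≤ 192 / R := by
  have hfst : ∀ (c : Vertex L) (g : Vertex L → ℝ), (∑ u : Vertex L, ∑ v : Vertex L,
      if adj u v then (if u = c then g v else 0) else 0) = ∑ v, if adj c v then g v else 0 := by
    intro c g
    rw [Finset.sum_eq_single c]
    · simp
    · intro u _ hu
      simp [hu]
    · simp
  have hsnd : ∀ (c : Vertex L) (g : Vertex L → ℝ), (∑ u : Vertex L, ∑ v : Vertex L,
      if adj u v then (if v = c then g u else 0) else 0) = ∑ v, if adj c v then g v else 0 := by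
    intro c g
    rw [Finset.sum_comm, ← hfst]
    simp only [adj_comm]
  have e : ∀ u v : Vertex L, (if adj u v then
      pot R (Equiv.swap u v a - Equiv.swap u v b) - pot R (a - b) else 0) =
      (if adj u v then (if u = a then pot R (v - b) - pot R (a - b) else 0) else 0) +
      (if adj u v then (if v = a then pot R (u - b) - pot R (a - b) else 0) else 0) +
      (if adj u v then (if u = b then pot R (v - a) - pot R (b - a) else 0) else 0) +
      (if adj u v then (if v = b then pot R (u - a) - pot R (b - a) else 0) else 0) := by
    intro u v
    by_cases h : adj u v
    · simp only [if_pos h]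
      exact pot_swap_sub hL R h hab hnadj
    · simp [h]
  simp only [e, Finset.sum_add_distrib]
  rw [hfst a fun v => pot R (v - b) - pot R (a - b),
    hsnd a fun v => pot R (v - b) - pot R (a - b),
    hfst b fun v => pot R (v - a) - pot R (b - a),
    hsnd b fun v => pot R (v - a) - pot R (b - a)]
  have h1 := sum_adj_pot_le hL hR hRL a b
  have h2 := sum_adj_pot_le hL hR hRL b a
  have h3 : 192 / R = 48 / R + 48 / R + 48 / R + 48 / R := by ring
  linarith

lemma sum_comm_pairs {V : Type*} [Fintype V] (f : V → V → V → V → ℝ) :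
    ∑ u, ∑ v, ∑ a, ∑ b, f u v a b = ∑ a, ∑ b, ∑ u, ∑ v, f u v a b := by
  calc _ = ∑ u, ∑ a, ∑ v, ∑ b, f u v a b := Finset.sum_congr rfl fun u _ => Finset.sum_comm
    _ = ∑ a, ∑ u, ∑ v, ∑ b, f u v a b := Finset.sum_comm
    _ = ∑ a, ∑ u, ∑ b, ∑ v, f u v a b :=
        Finset.sum_congr rfl fun a _ => Finset.sum_congr rfl fun u _ => Finset.sum_comm
    _ = _ := Finset.sum_congr rfl fun a _ => Finset.sum_comm

/-- Configurations with two adjacent particles. -/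
abbrev collSet (L : ℕ) : Set (Config L) :=
  {y : Config L | ∃ u v : Vertex L, adj u v ∧ y u = true ∧ y v = true}

/-- The total change of the energy over all ordered edges, by summing `sum_pot_swap_le` over pairs
of particles. -/
lemma energy_drift {L : ℕ} [NeZero L] (hL : 5 ≤ L) {R : ℝ} (hR : 0 < R)
    (hRL : R ≤ (L : ℝ) ^ 2 / 16) (x : Config L) (hx : x ∉ collSet L) :
    (∑ u : Vertex L, ∑ v : Vertex L, if adj u v then
      energy R (swapConfig x u v) - energy R x else 0) ≤ (numParticles x : ℝ) ^ 2 * (192 / R) := by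
  have e : ∀ u v : Vertex L, (if adj u v then energy R (swapConfig x u v) - energy R x else 0) =
      ∑ a : Vertex L, ∑ b : Vertex L, if x a = true ∧ x b = true ∧ a ≠ b then
        (if adj u v then pot R (Equiv.swap u v a - Equiv.swap u v b) - pot R (a - b) else 0)
        else 0 := by
    intro u v
    by_cases h : adj u v
    · simp only [if_pos h]
      rw [energy_swap, energy, ← Finset.sum_sub_distrib]
      refine Finset.sum_congr rfl fun a _ => ?_
      rw [← Finset.sum_sub_distrib]
      refine Finset.sum_congr rfl fun b _ => ?_
      split_ifs <;> simp
    · simp [h]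
  calc _ = ∑ a : Vertex L, ∑ b : Vertex L, ∑ u : Vertex L, ∑ v : Vertex L,
        if x a = true ∧ x b = true ∧ a ≠ b then
        (if adj u v then pot R (Equiv.swap u v a - Equiv.swap u v b) - pot R (a - b) else 0)
        else 0 := by
          simp only [e]
          exact sum_comm_pairs _
    _ ≤ ∑ a : Vertex L, ∑ b : Vertex L,
        (if x a = true then 1 else 0) * (if x b = true then 1 else 0) * (192 / R) := by
          refine Finset.sum_le_sum fun a _ => Finset.sum_le_sum fun b _ => ?_
          by_cases ha : x a = true
          · by_cases hb : x b = true
            · by_cases hab : a = b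
              · simp [hb, hab]; positivity
              · simp only [ha, hb, ne_eq, hab, not_false_eq_true, and_self, if_true, one_mul]
                exact sum_pot_swap_le hL hR hRL hab fun h => hx ⟨a, b, h, ha, hb⟩
            · simp [hb]
          · simp [ha]
    _ = (numParticles x : ℝ) ^ 2 * (192 / R) := by
          simp only [← Finset.sum_mul, ← Finset.mul_sum]
          rw [numParticles, Finset.card_filter]
          push_cast
          ring

/-- One step of simple exclusion from a collision-free configuration increases the expected energy
by at most `192 k² / (N R)`, for `k` particles and `N` ordered edges. Stated for `2 D - energy`. -/
lemma expected_energy {L : ℕ} [NeZero L] (hL : 5 ≤ L) {R : ℝ} (hR : 0 < R)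
    (hRL : R ≤ (L : ℝ) ^ 2 / 16) (D : ℝ) (y : Config L) (hy : y ∉ collSet L) :
    2 * D - energy R y - 1 / numAdj L * ((numParticles y : ℝ) ^ 2 * (192 / R)) ≤
      ∑ z, seKernel L y z * (2 * D - energy R z) := by
  have h1 := energy_drift hL hR hRL y hy
  have h2 : ∑ z, seKernel L y z * (2 * D - energy R z) - (2 * D - energy R y) =
      ∑ z, seKernel L y z * (energy R y - energy R z) := by
    have h3 : (2 * D - energy R y) = ∑ z, seKernel L y z * (2 * D - energy R y) := by
      rw [← Finset.sum_mul, seKernel_sum, one_mul]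
    rw [h3, ← Finset.sum_sub_distrib]
    exact Finset.sum_congr rfl fun z _ => by ring
  have h4 : ∑ z, seKernel L y z * (energy R y - energy R z) =
      -(1 / numAdj L * ∑ u : Vertex L, ∑ v : Vertex L, if adj u v then
        energy R (swapConfig y u v) - energy R y else 0) := by
    rw [← sum_seKernel_mul L y fun z => energy R z - energy R y, ← Finset.sum_neg_distrib]
    exact Finset.sum_congr rfl fun z _ => by ring
  have h5 := mul_le_mul_of_nonneg_left h1 (one_div_pos.mpr (numAdj_pos L)).le
  linarith

/-! ### Energy at collisions and at the start -/

lemma energy_coll {L : ℕ} [NeZero L] (hL : 5 ≤ L) {R : ℝ} (hR : 0 < R) (x : Config L)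
    (hx : x ∈ collSet L) : 2 * phi R (3 / 2) ≤ energy R x := by
  obtain ⟨u, v, huv, hu, hv⟩ := hx
  have hne : u ≠ v := fun h => adj_irrefl hL v (h ▸ huv)
  set f : Vertex L → Vertex L → ℝ :=
    fun a b => if x a = true ∧ x b = true ∧ a ≠ b then pot R (a - b) else 0 with hf
  have hnn : ∀ a b, 0 ≤ f a b := by
    intro a b
    simp only [hf]
    split_ifs
    · exact pot_nonneg hR _
    · exact le_rfl
  have h1 : f u v = phi R (3 / 2) := by
    simp only [hf]
    rw [if_pos ⟨hu, hv, hne⟩, pot_adj hL R huv]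
  have h2 : f v u = phi R (3 / 2) := by
    simp only [hf]
    rw [if_pos ⟨hv, hu, hne.symm⟩, pot_adj hL R ((adj_comm _ _).mp huv)]
  have h3 : f u v ≤ ∑ b, f u b := Finset.single_le_sum (fun b _ => hnn u b) (mem_univ v)
  have h4 : f v u ≤ ∑ b, f v b := Finset.single_le_sum (fun b _ => hnn v b) (mem_univ u)
  have h5 : ∑ a ∈ {u, v}, ∑ b, f a b ≤ ∑ a, ∑ b, f a b :=
    Finset.sum_le_sum_of_subset_of_nonneg (Finset.subset_univ _)
      fun a _ _ => Finset.sum_nonneg fun b _ => hnn a b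
  rw [Finset.sum_pair hne] at h5
  change 2 * phi R (3 / 2) ≤ ∑ a, ∑ b, f a b
  linarith

/-- In a configuration of `G(i)` only the close pair contributes to the energy. -/
lemma energy_init {L i : ℕ} [NeZero L] {R ρ : ℝ} (hR : 100 ≤ R)
    (hρ : ρ = Real.sqrt ((L : ℝ) ^ 2) / Real.log ((L : ℝ) ^ 2) ^ ((1 : ℝ) / 4))
    (hρ2 : 2 ≤ ρ) (hρR : 2 * R ≤ (ρ - 2) ^ 2) (y : Config L) (hy : y ∈ Gset L i) :
    energy R y ≤ 2 * phi R (3 / 2) - 1 / 2 := by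
  obtain ⟨-, x, ⟨-, hfar⟩, w, rfl, ⟨u₀, hu₀, hu₀w⟩, hw⟩ := hy
  rw [← hρ] at hfar
  have hself : torusDist w w = 0 := by simp [torusDist_eq]
  have hxw : x w ≠ true := by
    intro h
    have := hw w h
    omega
  have hfar1 : ∀ a b, x a = true → x b = true → a ≠ b → pot R (a - b) = 0 := by
    intro a b ha hb hab
    exact pot_far (d := ρ - 2) (by linarith) hρR (by linarith [hfar a b ha hb hab])
  have hfar2 : ∀ a, x a = true → a ≠ u₀ → pot R (a - w) = 0 := by
    intro a ha hau
    refine pot_far (d := ρ - 2) (by linarith) hρR ?_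
    have h1 := hfar a u₀ ha hu₀ hau
    have h2 := torusDist_triangle a w u₀
    rw [torusDist_comm w u₀, hu₀w] at h2
    have h3 : (torusDist a u₀ : ℝ) ≤ torusDist a w + 2 := by exact_mod_cast h2
    linarith
  have hclose := pot_two hR hu₀w
  have hc : 0 ≤ phi R (3 / 2) - 1 / 4 := (pot_nonneg (by linarith) _).trans hclose
  set c := phi R (3 / 2) - 1 / 4 with hcdef
  have key : ∀ a b : Vertex L,
      (if Function.update x w true a = true ∧ Function.update x w true b = true ∧ a ≠ b then
        pot R (a - b) else 0) ≤
      (if a = w then (if b = u₀ then c else 0) else 0) +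
        (if a = u₀ then (if b = w then c else 0) else 0) := by
    intro a b
    have hrhs : 0 ≤ (if a = w then (if b = u₀ then c else 0) else 0) +
        (if a = u₀ then (if b = w then c else 0) else 0) := by
      split_ifs <;> linarith
    by_cases h : Function.update x w true a = true ∧ Function.update x w true b = true ∧ a ≠ b
    · rw [if_pos h]
      obtain ⟨ha, hb, hab⟩ := h
      by_cases haw : a = w
      · subst haw
        have hb' : x b = true := by simpa [Function.update_of_ne hab.symm] using hb
        by_cases hbu : b = u₀
        · subst hbu
          rw [pot_sub_comm]
          simpa [hab] using hclose
        · rw [pot_sub_comm, hfar2 b hb' hbu]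
          exact hrhs
      · have ha' : x a = true := by simpa [Function.update_of_ne haw] using ha
        by_cases hbw : b = w
        · subst hbw
          by_cases hau : a = u₀
          · subst hau
            simpa [hab] using hclose
          · rw [hfar2 a ha' hau]
            exact hrhs
        · have hb' : x b = true := by simpa [Function.update_of_ne hbw] using hb
          rw [hfar1 a b ha' hb' hab]
          exact hrhs
    · rw [if_neg h]
      exact hrhs
  calc energy R (Function.update x w true) ≤ ∑ a : Vertex L, ∑ b : Vertex L,
      ((if a = w then (if b = u₀ then c else 0) else 0) +
        (if a = u₀ then (if b = w then c else 0) else 0)) :=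
        Finset.sum_le_sum fun a _ => Finset.sum_le_sum fun b _ => key a b
    _ = 2 * phi R (3 / 2) - 1 / 2 := by
        simp only [Finset.sum_add_distrib]
        rw [Finset.sum_comm (f := fun a b => if a = w then (if b = u₀ then c else 0) else 0),
          Finset.sum_comm (f := fun a b => if a = u₀ then (if b = w then c else 0) else 0)]
        simp [hcdef]
        ring

/-! ### Conclusion -/

/-- The quantitative bound for tori that are large enough. -/
lemma survProb_large {m i L : ℕ} [NeZero L] {δ : ℝ} (hδ : 0 < δ)
    (hδm : δ ≤ 1 / (768 * ((m : ℝ) + 1) ^ 2)) (him : i ≤ m) (hL : 100 ≤ L)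
    (hlog : 16 ≤ Real.log ((L : ℝ) ^ 2)) (hlogL : Real.log ((L : ℝ) ^ 2) ≤ L)
    (x : Config L) (hx : x ∈ Gset L i) :
    δ / Real.log ((L : ℝ) ^ 2) < survProb (seKernel L) x (collSet L)
      ⌊δ * ((L : ℝ) ^ 2) ^ 2 / Real.log ((L : ℝ) ^ 2)⌋₊ := by
  set l := Real.log ((L : ℝ) ^ 2) with hl
  have hl0 : 0 < l := by linarith
  have hL5 : 5 ≤ L := by omega
  have hLr : (100 : ℝ) ≤ L := by exact_mod_cast hL
  have hL0 : (0 : ℝ) < L := by linarith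
  set R := (L : ℝ) ^ 2 / l with hRdef
  have hRL : (L : ℝ) ≤ R := by
    rw [hRdef, le_div_iff₀ hl0]; nlinarith
  have hR100 : 100 ≤ R := by linarith
  have hR0 : 0 < R := by linarith
  have hR16 : R ≤ (L : ℝ) ^ 2 / 16 := by
    rw [hRdef]; gcongr
  -- the separation of the well-spaced particles, in terms of `a = l ^ (1 / 4)`
  set a := l ^ ((1 : ℝ) / 4) with ha
  have ha4 : a ^ 4 = l := by
    rw [ha, ← Real.rpow_natCast, ← Real.rpow_mul hl0.le]; norm_num
  have ha0 : 0 < a := Real.rpow_pos_of_pos hl0 _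
  have ha2 : 2 ≤ a := by
    by_contra h
    push Not at h
    have : a ^ 4 < 2 ^ 4 := pow_lt_pow_left₀ h ha0.le (by norm_num)
    linarith
  set ρ := Real.sqrt ((L : ℝ) ^ 2) / a with hρ
  have hρ' : ρ = L / a := by rw [hρ, Real.sqrt_sq hL0.le]
  have hρ8 : 8 ≤ ρ := by
    rw [hρ', le_div_iff₀ ha0]
    have : 2 ^ 3 ≤ a ^ 3 := pow_le_pow_left₀ (by norm_num) ha2 3
    nlinarith
  have hρR : 2 * R ≤ (ρ - 2) ^ 2 := by
    have h1 : R = (ρ / a) ^ 2 := by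
      rw [hRdef, hρ', ← ha4]; field_simp
    have h2 : ρ / a ≤ ρ / 2 := by gcongr
    have h3 : 0 ≤ ρ / a := by positivity
    have h4 : (ρ / a) ^ 2 ≤ (ρ / 2) ^ 2 := pow_le_pow_left₀ h3 h2 2
    rw [h1]
    nlinarith
  have hinit := energy_init hR100 hρ (by linarith) hρR x hx
  set D := phi R (3 / 2) with hD
  have hD4 : 1 / 4 ≤ D := by linarith [energy_nonneg hR0 x]
  have hDl : D ≤ l := by
    have h1 := phi_le hR0 (s := 3 / 2) (by norm_num)
    have h2 : 3 / 2 / R ≤ 1 := by rw [div_le_one hR0]; linarith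
    have h3 : 0 ≤ Real.log (3 / 2) := Real.log_nonneg (by norm_num)
    have h4 : Real.log R ≤ l := Real.log_le_log hR0 (by nlinarith)
    linarith
  have hN := numAdj_pos L
  set ε := 1 / numAdj L * (((i + 1 : ℕ) : ℝ) ^ 2 * (192 / R)) with hε
  have hε0 : 0 ≤ ε := by positivity
  have hxA : x ∉ collSet L := by
    rintro ⟨u, v, huv, hu, hv⟩
    exact hx.1.2 u v huv ⟨hu, hv⟩
  have hsurv := survProb_lower (seKernel L) (seKernel_nonneg L) (seKernel_sum L) (collSet L)
    (fun y => numParticles y = i + 1)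
    (fun y z hy hyz => (seKernel_numParticles y z hyz).trans hy) x hx.1.1 hxA
    (fun y => 2 * D - energy R y) (2 * D) ε hε0
    (fun y => by linarith [energy_nonneg hR0 y])
    (fun y hy => by linarith [energy_coll hL5 hR0 y hy])
    (fun y hy hyA => by
      have h := expected_energy hL5 hR0 hR16 D y hyA
      rw [hy] at h
      exact h)
    ⌊δ * ((L : ℝ) ^ 2) ^ 2 / l⌋₊
  -- the accumulated drift is at most `1 / 4`
  have hdrift : (⌊δ * ((L : ℝ) ^ 2) ^ 2 / l⌋₊ : ℝ) * ε ≤ 1 / 4 := by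
    have h1 : (⌊δ * ((L : ℝ) ^ 2) ^ 2 / l⌋₊ : ℝ) ≤ δ * (L : ℝ) ^ 2 * R := by
      refine (Nat.floor_le (by positivity)).trans (le_of_eq ?_)
      rw [hRdef]; ring
    have h2 : ε ≤ 1 / (L : ℝ) ^ 2 * (((m : ℝ) + 1) ^ 2 * (192 / R)) := by
      rw [hε]
      have : (i : ℝ) ≤ m := by exact_mod_cast him
      push_cast
      gcongr
      exact numAdj_ge L
    calc _ ≤ δ * (L : ℝ) ^ 2 * R * (1 / (L : ℝ) ^ 2 * (((m : ℝ) + 1) ^ 2 * (192 / R))) := by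
          gcongr
      _ = δ * (192 * ((m : ℝ) + 1) ^ 2) := by field_simp
      _ ≤ 1 / (768 * ((m : ℝ) + 1) ^ 2) * (192 * ((m : ℝ) + 1) ^ 2) := by gcongr
      _ = 1 / 4 := by field_simp; norm_num
  set p := survProb (seKernel L) x (collSet L) ⌊δ * ((L : ℝ) ^ 2) ^ 2 / l⌋₊ with hp
  have hδ8 : δ < 1 / 8 := by
    refine hδm.trans_lt ?_
    rw [div_lt_div_iff₀ (by positivity) (by norm_num)]
    nlinarith [(Nat.cast_nonneg m : (0 : ℝ) ≤ m)]
  have hp0 : 0 < p := by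
    by_contra h
    push Not at h
    have := mul_nonpos_of_nonneg_of_nonpos (show 0 ≤ 2 * D by linarith) h
    linarith
  rw [div_lt_iff₀ hl0]
  have := mul_le_mul_of_nonneg_left hDl hp0.le
  linarith

lemma survProb_zero {L : ℕ} [NeZero L] (x : Config L) (hx : x ∉ collSet L) :
    survProb (seKernel L) x (collSet L) 0 = 1 := by
  simp only [survProb, killedDist, ite_and]
  rw [Finset.sum_eq_single x]
  · simp [hx]
  · intro y _ hy
    simp [hy]
  · simp

lemma exists_large : ∃ N : ℕ, ∀ L : ℕ, N ≤ L →
    100 ≤ L ∧ 16 ≤ Real.log ((L : ℝ) ^ 2) ∧ Real.log ((L : ℝ) ^ 2) ≤ L := by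
  rw [← Filter.eventually_atTop (p := fun L : ℕ =>
    100 ≤ L ∧ 16 ≤ Real.log ((L : ℝ) ^ 2) ∧ Real.log ((L : ℝ) ^ 2) ≤ L)]
  have h1 : Filter.Tendsto (fun L : ℕ => (L : ℝ)) Filter.atTop Filter.atTop :=
    tendsto_natCast_atTop_atTop
  have h2 := h1.eventually (Real.isLittleO_log_id_atTop.bound (show (0 : ℝ) < 1 / 2 by norm_num))
  have h3 := (Real.tendsto_log_atTop.comp h1).eventually_ge_atTop 8
  filter_upwards [h2, h3, Filter.eventually_ge_atTop 100] with L h2 h3 h4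
  simp only [Function.comp_apply] at h3
  rw [Real.log_pow]
  refine ⟨h4, by push_cast; linarith, ?_⟩
  have h5 : Real.log L ≤ 1 / 2 * L := by
    refine (le_abs_self _).trans ?_
    simpa using h2
  push_cast
  linarith

/-- collision time of simple exclusion from well-spaced configurations.
Fix `m ∈ ℕ` and `1 ≤ i ≤ m`. For the simple exclusion process on `Λ(L,2)` started at a
configuration in `G(i)`, the first time `τ_coll` at which two particles are adjacent
satisfies `P[τ_coll > δ n² / log n] > δ / log n` for some `δ = δ(m) > 0`. -/
theorem se_collision_time_lower (m : ℕ) (hm : 1 ≤ m) :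
    ∃ δ : ℝ, 0 < δ ∧
      ∀ i : ℕ, 1 ≤ i → i ≤ m → ∀ (L : ℕ) [NeZero L], ∀ x : Config L, x ∈ Gset L i →
        δ / Real.log ((L : ℝ) ^ 2) <
          survProb (seKernel L) x
            {y : Config L | ∃ u v : Vertex L, adj u v ∧ y u = true ∧ y v = true}
            ⌊δ * ((L : ℝ) ^ 2) ^ 2 / Real.log ((L : ℝ) ^ 2)⌋₊ := by
  obtain ⟨N, hN⟩ := exists_large
  have hm0 : (0 : ℝ) < 768 * ((m : ℝ) + 1) ^ 2 := by positivity
  -- on tori of side less than `N` this choice makes the time horizon `0`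
  set δ : ℝ := 1 / (768 * ((m : ℝ) + 1) ^ 2 * ((N : ℝ) + 1) ^ 4) with hδ
  have hN1 : (1 : ℝ) ≤ ((N : ℝ) + 1) ^ 4 :=
    one_le_pow₀ (by linarith [(Nat.cast_nonneg N : (0 : ℝ) ≤ N)])
  have hδ0 : 0 < δ := by positivity
  have hδm : δ ≤ 1 / (768 * ((m : ℝ) + 1) ^ 2) := by
    rw [hδ]
    exact one_div_le_one_div_of_le hm0 (le_mul_of_one_le_right hm0.le hN1)
  refine ⟨δ, hδ0, ?_⟩
  intro i hi him L _ x hx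
  by_cases hL : N ≤ L
  · obtain ⟨h1, h2, h3⟩ := hN L hL
    exact survProb_large hδ0 hδm him h1 h2 h3 x hx
  · have hxA : x ∉ collSet L := by
      rintro ⟨u, v, huv, hu, hv⟩
      exact hx.1.2 u v huv ⟨hu, hv⟩
    have hL2 : 2 ≤ L := by
      have hL0 := NeZero.pos L
      by_contra h
      have hL1 : L = 1 := by omega
      subst hL1
      obtain ⟨-, y, -, w, -, ⟨u, -, huw⟩, -⟩ := hx
      rw [Subsingleton.elim u w] at huw
      simp [torusDist_eq] at huw
    have hLr : (2 : ℝ) ≤ L := by exact_mod_cast hL2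
    have hLN : (L : ℝ) ≤ (N : ℝ) + 1 := by
      have : L ≤ N + 1 := by omega
      exact_mod_cast this
    have hlog : 1 ≤ Real.log ((L : ℝ) ^ 2) := by
      rw [Real.log_pow]
      have h1 := Real.log_two_gt_d9
      have h2 := Real.log_le_log (by norm_num) hLr
      push_cast
      linarith
    have hδL : δ * ((L : ℝ) ^ 2) ^ 2 < 1 := by
      have h1 : ((L : ℝ) ^ 2) ^ 2 ≤ ((N : ℝ) + 1) ^ 4 := by
        rw [← pow_mul]; gcongr
      calc δ * ((L : ℝ) ^ 2) ^ 2 ≤ δ * ((N : ℝ) + 1) ^ 4 := by gcongr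
        _ = 1 / (768 * ((m : ℝ) + 1) ^ 2) := by rw [hδ]; field_simp
        _ < 1 := by
          rw [div_lt_one hm0]
          nlinarith [(Nat.cast_nonneg m : (0 : ℝ) ≤ m)]
    have hT : ⌊δ * ((L : ℝ) ^ 2) ^ 2 / Real.log ((L : ℝ) ^ 2)⌋₊ = 0 := by
      rw [Nat.floor_eq_zero, div_lt_one (by linarith)]
      linarith
    rw [hT]
    have h0 := survProb_zero x hxA
    change _ < survProb (seKernel L) x (collSet L) 0
    rw [h0, div_lt_one (by linarith)]
    have : δ ≤ δ * ((L : ℝ) ^ 2) ^ 2 :=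
      le_mul_of_one_le_right hδ0.le (one_le_pow₀ (one_le_pow₀ (by linarith)))
    linarith

end KCIP
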